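/- Independence for p-entailment: Let K be a consistent statistical ALC knowledge base and (C|D) a query. Then K ⊨_p (C|D)[m,M] if and only if {κ ∈ K : κ ⇌* (C|D)} ⊨_p (C|D)[m,M], where {κ ∈ K : κ ⇌* (C|D)} is the restriction of K to the conditionals connected to the query (C|D). -/

import Mathlib

open scoped Classical

/-- ALC concepts over concept names and role names (both drawn from ℕ,
regarded as disjoint name spaces). -/
inductive Cpt : Type where
  | top : Cpt
  | atom : ℕ → Cpt
  | neg : Cpt → Cpt
  | inter : Cpt → Cpt → Cpt
  | ex : ℕ → Cpt → Cpt
deriving DecidableEq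

/-- A finite interpretation with domain drawn from the type `α`. -/
structure Interp (α : Type) where
  dom : Finset α
  dom_nonempty : dom.Nonempty
  conc : ℕ → Finset α
  conc_sub : ∀ a, conc a ⊆ dom
  role : ℕ → Finset (α × α)
  role_sub : ∀ r, role r ⊆ dom ×ˢ dom

/-- The extension `C^I` of a concept. -/
noncomputable def Interp.ext {α : Type} (I : Interp α) : Cpt → Finset α
  | .top => I.dom
  | .atom a => I.conc a
  | .neg c => I.dom \ I.ext c
  | .inter c d => I.ext c ∩ I.ext d
  | .ex r c => I.dom.filter (fun d => ∃ e ∈ I.ext c, (d, e) ∈ I.role r)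

/-- `[C]^I`, the cardinality of the extension of `C`. -/
noncomputable def cardC {α : Type} (I : Interp α) (c : Cpt) : ℕ := (I.ext c).card

/-- A probabilistic conditional `(C|D)[l,u]`. -/
structure Cond : Type where
  C : Cpt
  D : Cpt
  l : ℚ
  u : ℚ
deriving DecidableEq

/-- `I ⊨ (C|D)[l,u]` iff `[D]^I = 0` or `l ≤ [C ⊓ D]^I/[D]^I ≤ u`. -/
def satCond {α : Type} (I : Interp α) (κ : Cond) : Prop :=
  cardC I κ.D = 0 ∨
    (κ.l ≤ (cardC I (.inter κ.C κ.D) : ℚ) / (cardC I κ.D : ℚ) ∧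
     (cardC I (.inter κ.C κ.D) : ℚ) / (cardC I κ.D : ℚ) ≤ κ.u)

/-- Finite interpretations (with domain drawn from the countable set ℕ). -/
abbrev FInterp := Interp ℕ

/-- The models of a knowledge base (finite set of conditionals). -/
def Models (K : Finset Cond) : Set FInterp := {I | ∀ κ ∈ K, satCond I κ}

/-- l-entailment: every model of `K` satisfies the conditional. -/
def entailsL (K : Finset Cond) (κ : Cond) : Prop := ∀ I ∈ Models K, satCond I κ

/-- The set of proportions `[C ⊓ D]^I/[D]^I` over models `I` of `K` with `[D]^I > 0`. -/
def ratioSet (K : Finset Cond) (C D : Cpt) : Set ℝ :=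
  {x | ∃ I ∈ Models K, 0 < cardC I D ∧
    x = (cardC I (.inter C D) : ℝ) / (cardC I D : ℝ)}

/-- p-entailment: some model satisfies `[D]^I > 0`, and `m`, `M` are the infimum and
supremum of the proportions `[C ⊓ D]^I/[D]^I` over models with `[D]^I > 0`. -/
def entailsP (K : Finset Cond) (C D : Cpt) (m M : ℝ) : Prop :=
  (∃ I ∈ Models K, 0 < cardC I D) ∧
    m = sInf (ratioSet K C D) ∧ M = sSup (ratioSet K C D)

/-- The signature of a concept: its concept names (`Sum.inl`) and role names (`Sum.inr`). -/
def sig : Cpt → Finset (ℕ ⊕ ℕ)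
  | .top => ∅
  | .atom a => {Sum.inl a}
  | .neg c => sig c
  | .inter c d => sig c ∪ sig d
  | .ex r c => insert (Sum.inr r) (sig c)

/-- Directly connected: the signatures of the two (qualitative) conditionals overlap. -/
def dconn (p q : Cpt × Cpt) : Prop :=
  ((sig p.1 ∪ sig p.2) ∩ (sig q.1 ∪ sig q.2)).Nonempty

/-- Connected (`⇌*`): transitive closure of `⇌` among the conditionals of the KB
together with the query. -/
def connIn (P : Set (Cpt × Cpt)) : Cpt × Cpt → Cpt × Cpt → Prop :=
  Relation.TransGen (fun p q => dconn p q ∧ p ∈ P ∧ q ∈ P)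

/-! Consistency of the unconnected part of `K` is what makes it irrelevant. Given a model `I` of the
connected part and a model `J` of the rest, read the names connected to the query in the first
coordinate of `I.dom ×ˢ J.dom` and all other names in the second. Both projections are then bounded
morphisms, so every cardinality over connected names is that of `I` multiplied by `|J.dom|`, and
every cardinality over the other names is that of `J` multiplied by `|I.dom|`. Ratios are unchanged,
hence the product is a model of `K` with the same proportion for the query as `I`. -/

variable {α β : Type}

theorem Interp.ext_subset_dom (I : Interp α) (c : Cpt) : I.ext c ⊆ I.dom := by
  cases c with
  | top => exact Finset.Subset.refl _
  | atom a => exact I.conc_sub a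
  | neg c => exact Finset.sdiff_subset
  | inter c d => exact Finset.inter_subset_left.trans (I.ext_subset_dom c)
  | ex r c => exact Finset.filter_subset _ _

/-- Bounded morphisms (p-morphisms) of interpretations with respect to the names in `S`: maps of the
domains under which the extensions of concepts over `S` are preimages. -/
structure IsBoundedMorphism (S : Set (ℕ ⊕ ℕ)) (I : Interp α) (J : Interp β) (f : α → β) :
    Prop where
  map_mem_dom : ∀ {d}, d ∈ I.dom → f d ∈ J.dom
  mem_conc_iff : ∀ {a}, Sum.inl a ∈ S → ∀ {d}, d ∈ I.dom → (d ∈ I.conc a ↔ f d ∈ J.conc a)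
  forth : ∀ {r}, Sum.inr r ∈ S → ∀ {d e}, (d, e) ∈ I.role r → (f d, f e) ∈ J.role r
  back : ∀ {r}, Sum.inr r ∈ S → ∀ {d e'}, d ∈ I.dom → (f d, e') ∈ J.role r →
    ∃ e, (d, e) ∈ I.role r ∧ f e = e'

theorem IsBoundedMorphism.mem_ext_iff {S : Set (ℕ ⊕ ℕ)} {I : Interp α} {J : Interp β} {f : α → β}
    (hf : IsBoundedMorphism S I J f) {c : Cpt} (hc : (sig c : Set (ℕ ⊕ ℕ)) ⊆ S) {d : α}
    (hd : d ∈ I.dom) : d ∈ I.ext c ↔ f d ∈ J.ext c := by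
  induction c generalizing d with
  | top => exact iff_of_true hd (hf.map_mem_dom hd)
  | atom a => exact hf.mem_conc_iff (hc (by simp [sig])) hd
  | neg c ih => simp only [Interp.ext, Finset.mem_sdiff, ih hc hd, hd, hf.map_mem_dom hd]
  | inter c₁ c₂ ih₁ ih₂ =>
    rw [sig, Finset.coe_union, Set.union_subset_iff] at hc
    simp only [Interp.ext, Finset.mem_inter, ih₁ hc.1 hd, ih₂ hc.2 hd]
  | ex r c ih =>
    rw [sig, Finset.coe_insert, Set.insert_subset_iff] at hc
    simp only [Interp.ext, Finset.mem_filter, hd, hf.map_mem_dom hd, true_and]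
    constructor
    · rintro ⟨e, he, hde⟩
      exact ⟨f e, (ih hc.2 (I.ext_subset_dom c he)).1 he, hf.forth hc.1 hde⟩
    · rintro ⟨_, he, hfde⟩
      obtain ⟨e, hde, rfl⟩ := hf.back hc.1 hd hfde
      have he_dom : e ∈ I.dom := (Finset.mem_product.1 (I.role_sub r hde)).2
      exact ⟨e, (ih hc.2 he_dom).2 he, hde⟩

/-- The image of an interpretation under an embedding of its domain type; it transports
interpretations to `ℕ`, the domain type used in `Models`. -/
def Interp.map (f : α ↪ β) (I : Interp α) : Interp β where
  dom := I.dom.map f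
  dom_nonempty := I.dom_nonempty.map
  conc a := (I.conc a).map f
  conc_sub a := Finset.map_subset_map.2 (I.conc_sub a)
  role r := (I.role r).map (f.prodMap f)
  role_sub r := by
    rw [← Finset.prodMap_map_product]
    exact Finset.map_subset_map.2 (I.role_sub r)

theorem Interp.isBoundedMorphism_map (f : α ↪ β) (I : Interp α) :
    IsBoundedMorphism Set.univ I (I.map f) f where
  map_mem_dom := Finset.mem_map_of_mem f
  mem_conc_iff _ _ _ := (Finset.mem_map' f).symm
  forth _ _ _ := Finset.mem_map_of_mem (f.prodMap f)
  back _ d e' _ h := by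
    obtain ⟨⟨d₀, e⟩, hde, heq⟩ := Finset.mem_map.1 h
    obtain ⟨hd, he⟩ := Prod.mk.inj heq
    obtain rfl := f.injective hd
    exact ⟨e, hde, he⟩

theorem Interp.ext_map (f : α ↪ β) (I : Interp α) (c : Cpt) :
    (I.map f).ext c = (I.ext c).map f := by
  have hf {d : α} (hd : d ∈ I.dom) : d ∈ I.ext c ↔ f d ∈ (I.map f).ext c :=
    (I.isBoundedMorphism_map f).mem_ext_iff (Set.subset_univ _) hd
  ext x
  rw [Finset.mem_map]
  constructor
  · intro hx
    obtain ⟨d, hd, rfl⟩ := Finset.mem_map.1 ((I.map f).ext_subset_dom c hx)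
    exact ⟨d, (hf hd).2 hx, rfl⟩
  · rintro ⟨d, hd, rfl⟩
    exact (hf (I.ext_subset_dom c hd)).1 hd

theorem cardC_map (f : α ↪ β) (I : Interp α) (c : Cpt) : cardC (I.map f) c = cardC I c := by
  rw [cardC, I.ext_map, Finset.card_map, cardC]

/-- The fusion of `I` and `J` along `S`: the product domain, with the names in `S` read in the first
coordinate by `I` and the other names in the second coordinate by `J`. A role puts no constraint on
the coordinate in which it is not read. -/
noncomputable def Interp.fusion (S : Set (ℕ ⊕ ℕ)) (I : Interp α) (J : Interp β) :
    Interp (α × β) where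
  dom := I.dom ×ˢ J.dom
  dom_nonempty := I.dom_nonempty.product J.dom_nonempty
  conc a := (I.dom ×ˢ J.dom).filter fun d =>
    if Sum.inl a ∈ S then d.1 ∈ I.conc a else d.2 ∈ J.conc a
  conc_sub _ := Finset.filter_subset _ _
  role r := ((I.dom ×ˢ J.dom) ×ˢ (I.dom ×ˢ J.dom)).filter fun p =>
    if Sum.inr r ∈ S then (p.1.1, p.2.1) ∈ I.role r else (p.1.2, p.2.2) ∈ J.role r
  role_sub _ := Finset.filter_subset _ _

section Fusion

variable (S : Set (ℕ ⊕ ℕ)) (I : Interp α) (J : Interp β)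

theorem isBoundedMorphism_fst : IsBoundedMorphism S (I.fusion S J) I Prod.fst where
  map_mem_dom hd := (Finset.mem_product.1 hd).1
  mem_conc_iff ha _ hd := by
    rw [Interp.fusion, Finset.mem_filter, if_pos ha]
    exact and_iff_right hd
  forth hr _ _ h := by
    rw [Interp.fusion, Finset.mem_filter, if_pos hr] at h
    exact h.2
  back {r} hr d e' hd h := by
    have he' : e' ∈ I.dom := (Finset.mem_product.1 (I.role_sub r h)).2
    refine ⟨(e', d.2), ?_, rfl⟩
    rw [Interp.fusion, Finset.mem_filter, if_pos hr]
    exact ⟨Finset.mk_mem_product hd (Finset.mk_mem_product he' (Finset.mem_product.1 hd).2), h⟩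

theorem isBoundedMorphism_snd : IsBoundedMorphism Sᶜ (I.fusion S J) J Prod.snd where
  map_mem_dom hd := (Finset.mem_product.1 hd).2
  mem_conc_iff ha _ hd := by
    rw [Interp.fusion, Finset.mem_filter, if_neg ha]
    exact and_iff_right hd
  forth hr _ _ h := by
    rw [Interp.fusion, Finset.mem_filter, if_neg hr] at h
    exact h.2
  back {r} hr d e' hd h := by
    have he' : e' ∈ J.dom := (Finset.mem_product.1 (J.role_sub r h)).2
    refine ⟨(d.1, e'), ?_, rfl⟩
    rw [Interp.fusion, Finset.mem_filter, if_neg hr]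
    exact ⟨Finset.mk_mem_product hd (Finset.mk_mem_product (Finset.mem_product.1 hd).1 he'), h⟩

variable {S} {c : Cpt}

theorem ext_fusion_of_sig_subset (hc : (sig c : Set (ℕ ⊕ ℕ)) ⊆ S) :
    (I.fusion S J).ext c = I.ext c ×ˢ J.dom := by
  ext d
  rw [Finset.mem_product]
  constructor
  · intro hd
    have hdom := (I.fusion S J).ext_subset_dom c hd
    exact ⟨((isBoundedMorphism_fst S I J).mem_ext_iff hc hdom).1 hd, (Finset.mem_product.1 hdom).2⟩
  · rintro ⟨h₁, h₂⟩
    exact ((isBoundedMorphism_fst S I J).mem_ext_iff hc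
      (Finset.mem_product.2 ⟨I.ext_subset_dom c h₁, h₂⟩)).2 h₁

theorem ext_fusion_of_sig_subset_compl (hc : (sig c : Set (ℕ ⊕ ℕ)) ⊆ Sᶜ) :
    (I.fusion S J).ext c = I.dom ×ˢ J.ext c := by
  ext d
  rw [Finset.mem_product]
  constructor
  · intro hd
    have hdom := (I.fusion S J).ext_subset_dom c hd
    exact ⟨(Finset.mem_product.1 hdom).1, ((isBoundedMorphism_snd S I J).mem_ext_iff hc hdom).1 hd⟩
  · rintro ⟨h₁, h₂⟩
    exact ((isBoundedMorphism_snd S I J).mem_ext_iff hc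
      (Finset.mem_product.2 ⟨h₁, J.ext_subset_dom c h₂⟩)).2 h₂

theorem cardC_fusion_of_sig_subset (hc : (sig c : Set (ℕ ⊕ ℕ)) ⊆ S) :
    cardC (I.fusion S J) c = cardC I c * J.dom.card := by
  rw [cardC, ext_fusion_of_sig_subset I J hc, Finset.card_product, cardC]

theorem cardC_fusion_of_sig_subset_compl (hc : (sig c : Set (ℕ ⊕ ℕ)) ⊆ Sᶜ) :
    cardC (I.fusion S J) c = cardC J c * I.dom.card := by
  rw [cardC, ext_fusion_of_sig_subset_compl I J hc, Finset.card_product, mul_comm, cardC]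

end Fusion

/-- The signature of a conditional or query, given as a pair of concepts. -/
def pairSig (p : Cpt × Cpt) : Finset (ℕ ⊕ ℕ) := sig p.1 ∪ sig p.2

theorem coe_sig_snd_subset_pairSig (p : Cpt × Cpt) :
    (sig p.2 : Set (ℕ ⊕ ℕ)) ⊆ pairSig p :=
  Finset.coe_subset.2 Finset.subset_union_right

/-- `J` multiplies the cardinalities of all concepts over `S` by a common positive factor, so that
conditionals over `S` have the same proportions in `J` as in `I`. -/
def IsScaling (S : Set (ℕ ⊕ ℕ)) (I : Interp α) (J : Interp β) : Prop :=
  ∃ k : ℕ, 0 < k ∧ ∀ c, (sig c : Set (ℕ ⊕ ℕ)) ⊆ S → cardC J c = cardC I c * k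

theorem Interp.isScaling_fusion_left (S : Set (ℕ ⊕ ℕ)) (I : Interp α) (J : Interp β) :
    IsScaling S I (I.fusion S J) :=
  ⟨J.dom.card, J.dom_nonempty.card_pos, fun _ => cardC_fusion_of_sig_subset I J⟩

theorem Interp.isScaling_fusion_right (S : Set (ℕ ⊕ ℕ)) (I : Interp α) (J : Interp β) :
    IsScaling Sᶜ J (I.fusion S J) :=
  ⟨I.dom.card, I.dom_nonempty.card_pos, fun _ => cardC_fusion_of_sig_subset_compl I J⟩

namespace IsScaling

variable {S : Set (ℕ ⊕ ℕ)} {I : Interp α} {J : Interp β}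

theorem map_right {γ : Type} (h : IsScaling S I J) (f : β ↪ γ) : IsScaling S I (J.map f) := by
  simpa only [IsScaling, cardC_map] using h

theorem cardC_pos_iff {c : Cpt} (h : IsScaling S I J) (hc : (sig c : Set (ℕ ⊕ ℕ)) ⊆ S) :
    0 < cardC J c ↔ 0 < cardC I c := by
  obtain ⟨k, hk, hcard⟩ := h
  rw [hcard c hc, Nat.mul_pos_iff_of_pos_right hk]

theorem ratio_eq (F : Type*) [Field F] [CharZero F] {C D : Cpt} (h : IsScaling S I J)
    (hS : (pairSig (C, D) : Set (ℕ ⊕ ℕ)) ⊆ S) :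
    (cardC J (.inter C D) : F) / cardC J D = (cardC I (.inter C D) : F) / cardC I D := by
  obtain ⟨k, hk, hcard⟩ := h
  rw [hcard D ((coe_sig_snd_subset_pairSig (C, D)).trans hS), hcard (.inter C D) hS]
  push_cast
  exact mul_div_mul_right _ _ (Nat.cast_ne_zero.2 hk.ne')

theorem satCond_iff {κ : Cond} (h : IsScaling S I J)
    (hκ : (pairSig (κ.C, κ.D) : Set (ℕ ⊕ ℕ)) ⊆ S) : satCond J κ ↔ satCond I κ := by
  have hzero : cardC J κ.D = 0 ↔ cardC I κ.D = 0 := by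
    simpa only [Nat.pos_iff_ne_zero, ne_eq, not_iff_not] using
      h.cardC_pos_iff ((coe_sig_snd_subset_pairSig (κ.C, κ.D)).trans hκ)
  rw [satCond, satCond, h.ratio_eq ℚ hκ, hzero]

end IsScaling

theorem models_anti {K₁ K₂ : Finset Cond} (h : K₁ ⊆ K₂) : Models K₂ ⊆ Models K₁ :=
  fun _ hI κ hκ => hI κ (h hκ)

theorem exists_isScaling_mem_models_union {S : Set (ℕ ⊕ ℕ)} {K₁ K₂ : Finset Cond}
    (h₁ : ∀ κ ∈ K₁, (pairSig (κ.C, κ.D) : Set (ℕ ⊕ ℕ)) ⊆ S)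
    (h₂ : ∀ κ ∈ K₂, (pairSig (κ.C, κ.D) : Set (ℕ ⊕ ℕ)) ⊆ Sᶜ)
    {I J : FInterp} (hI : I ∈ Models K₁) (hJ : J ∈ Models K₂) :
    ∃ L ∈ Models (K₁ ∪ K₂), IsScaling S I L := by
  have hIL := (I.isScaling_fusion_left S J).map_right Nat.pairEquiv.toEmbedding
  have hJL := (I.isScaling_fusion_right S J).map_right Nat.pairEquiv.toEmbedding
  refine ⟨_, fun κ hκ => ?_, hIL⟩
  rcases Finset.mem_union.1 hκ with hκ | hκ
  · exact (hIL.satCond_iff (h₁ κ hκ)).2 (hI κ hκ)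
  · exact (hJL.satCond_iff (h₂ κ hκ)).2 (hJ κ hκ)

theorem ratioSet_union_eq {S : Set (ℕ ⊕ ℕ)} {K₁ K₂ : Finset Cond} {C D : Cpt}
    (h₁ : ∀ κ ∈ K₁, (pairSig (κ.C, κ.D) : Set (ℕ ⊕ ℕ)) ⊆ S)
    (h₂ : ∀ κ ∈ K₂, (pairSig (κ.C, κ.D) : Set (ℕ ⊕ ℕ)) ⊆ Sᶜ)
    (hK₂ : (Models K₂).Nonempty) (hCD : (pairSig (C, D) : Set (ℕ ⊕ ℕ)) ⊆ S) :
    ratioSet (K₁ ∪ K₂) C D = ratioSet K₁ C D := by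
  obtain ⟨J, hJ⟩ := hK₂
  apply Set.Subset.antisymm
  · rintro _ ⟨I, hI, hpos, rfl⟩
    exact ⟨I, models_anti Finset.subset_union_left hI, hpos, rfl⟩
  · rintro _ ⟨I, hI, hpos, rfl⟩
    obtain ⟨L, hL, hIL⟩ := exists_isScaling_mem_models_union h₁ h₂ hI hJ
    have hD := (coe_sig_snd_subset_pairSig (C, D)).trans hCD
    exact ⟨L, hL, (hIL.cardC_pos_iff hD).2 hpos, (hIL.ratio_eq ℝ hCD).symm⟩

theorem ratioSet_nonempty_iff {K : Finset Cond} {C D : Cpt} :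
    (ratioSet K C D).Nonempty ↔ ∃ I ∈ Models K, 0 < cardC I D :=
  ⟨fun ⟨_, I, hI, hpos, _⟩ => ⟨I, hI, hpos⟩, fun ⟨I, hI, hpos⟩ => ⟨_, I, hI, hpos, rfl⟩⟩

theorem entailsP_congr {K₁ K₂ : Finset Cond} {C D : Cpt} {m M : ℝ}
    (h : ratioSet K₁ C D = ratioSet K₂ C D) : entailsP K₁ C D m M ↔ entailsP K₂ C D m M := by
  rw [entailsP, entailsP, ← ratioSet_nonempty_iff, ← ratioSet_nonempty_iff, h]

/-- For `q ∈ P`, the names occurring in `q` or in a pair of `P` connected to `q`: the signature along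
which a knowledge base is split. -/
def connSig (P : Set (Cpt × Cpt)) (q : Cpt × Cpt) : Set (ℕ ⊕ ℕ) :=
  {x | ∃ p ∈ P, (p = q ∨ connIn P p q) ∧ x ∈ pairSig p}

theorem pairSig_subset_compl_connSig {P : Set (Cpt × Cpt)} {p q : Cpt × Cpt} (hp : p ∈ P)
    (hpq : ¬ connIn P p q) : (pairSig p : Set (ℕ ⊕ ℕ)) ⊆ (connSig P q)ᶜ := by
  rintro x hxp ⟨p', hp', hp'q, hxp'⟩
  have hadj : dconn p p' ∧ p ∈ P ∧ p' ∈ P := ⟨⟨x, Finset.mem_inter.2 ⟨hxp, hxp'⟩⟩, hp, hp'⟩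
  rcases hp'q with rfl | hconn
  · exact hpq (.single hadj)
  · exact hpq (.head hadj hconn)

/-- Independence for p-entailment. -/
theorem independence_p (K : Finset Cond) (hK : (Models K).Nonempty)
    (C D : Cpt) (m M : ℝ) :
    entailsP K C D m M ↔
      entailsP
        (K.filter fun κ =>
          connIn ((↑(K.image fun κ' => (κ'.C, κ'.D)) : Set (Cpt × Cpt)) ∪ {(C, D)})
            (κ.C, κ.D) (C, D))
        C D m M := by
  set P : Set (Cpt × Cpt) := ↑(K.image fun κ' => (κ'.C, κ'.D)) ∪ {(C, D)}
  have mem_P {κ : Cond} (hκ : κ ∈ K) : (κ.C, κ.D) ∈ P :=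
    .inl (Finset.mem_coe.2 (Finset.mem_image_of_mem _ hκ))
  apply entailsP_congr
  conv_lhs => rw [← Finset.filter_union_filter_not_eq (fun κ => connIn P (κ.C, κ.D) (C, D)) K]
  refine ratioSet_union_eq (S := connSig P (C, D)) (fun κ hκ x hx => ?_) (fun κ hκ => ?_)
    (hK.mono (models_anti (Finset.filter_subset _ _))) fun x hx => ⟨_, .inr rfl, .inl rfl, hx⟩
  · obtain ⟨hκK, hconn⟩ := Finset.mem_filter.1 hκ
    exact ⟨_, mem_P hκK, .inr hconn, hx⟩
  · obtain ⟨hκK, hconn⟩ := Finset.mem_filter.1 hκ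
    exact pairSig_subset_compl_connSig (mem_P hκK) hconn
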